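/- For every integer n > 2^50, every positive integer N, and every n-linear form U : (ℂ^N)^n → ℂ, one has (∑_{i₁,…,iₙ=1}^N |U(e_{i₁},…,e_{iₙ})|^{2n/(n+1)})^{(n+1)/(2n)} ≤ 0.99135458644 · (n-1)^{0.304975} · ‖U‖. -/

import Mathlib

open Real

/-- The Bohnenblust--Hille quantity of an `n`-linear form on `ℓ_∞^N` over `ℂ`:
`(∑_{i₁,…,iₙ} |U(e_{i₁},…,e_{iₙ})|^{2n/(n+1)})^{(n+1)/(2n)}`. -/
noncomputable def BHcomplex (n N : ℕ)
    (U : ContinuousMultilinearMap ℂ (fun _ : Fin n => (Fin N → ℂ)) ℂ) : ℝ :=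
  (∑ i : Fin n → Fin N,
      ‖U (fun k => Pi.single (i k) (1 : ℂ))‖ ^ ((2 * n : ℝ) / (n + 1)))
    ^ ((n + 1 : ℝ) / (2 * n))


theorem log_le_q (y : ℝ) (hy : 0 < y) :
    Real.log y ≤ -1.285 + (73/45) * y - (16/45) * y^2 + (4/135) * y^3 := by
  set g : ℝ → ℝ := fun y => -1.285 + (73/45) * y - (16/45) * y^2 + (4/135) * y^3 - Real.log y with hg
  have hd : ∀ x : ℝ, 0 < x → HasDerivAt g ((4/45) * (x-1)*(x-5/2)*(x-9/2)/x) x := by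
    intro x hx
    have h1 := ((((hasDerivAt_const x (-1.285:ℝ)).add ((hasDerivAt_id x).const_mul (73/45:ℝ))).sub
      (((hasDerivAt_id x).pow 2).const_mul (16/45:ℝ))).add
      (((hasDerivAt_id x).pow 3).const_mul (4/135:ℝ))).sub (Real.hasDerivAt_log hx.ne')
    refine HasDerivAt.congr_deriv (f := g) h1 ?_
    simp only [id]
    push_cast
    field_simp
    ring
  have hc : ContinuousOn g (Set.Ioi 0) := fun x hx => (hd x hx).continuousAt.continuousWithinAt
  have mono : ∀ a b : ℝ, 0 < a → a ≤ b → (∀ x, a < x → x < b → 0 ≤ (x-1)*(x-5/2)*(x-9/2)) → g a ≤ g b := by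
    intro a b ha hab h
    have := monotoneOn_of_deriv_nonneg (convex_Icc a b) (f := g)
      (hc.mono (fun x hx => lt_of_lt_of_le ha hx.1))
      (fun x hx => by
        rw [interior_Icc] at hx
        exact (hd x (ha.trans hx.1)).differentiableAt.differentiableWithinAt)
      (fun x hx => by
        rw [interior_Icc] at hx
        rw [(hd x (ha.trans hx.1)).deriv]
        have := h x hx.1 hx.2
        have hx0 := ha.trans hx.1
        apply div_nonneg _ hx0.le
        nlinarith)
    exact this ⟨le_rfl, hab⟩ ⟨hab, le_rfl⟩ hab
  have anti : ∀ a b : ℝ, 0 < a → a ≤ b → (∀ x, a < x → x < b → (x-1)*(x-5/2)*(x-9/2) ≤ 0) → g b ≤ g a := by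
    intro a b ha hab h
    have := antitoneOn_of_deriv_nonpos (convex_Icc a b) (f := g)
      (hc.mono (fun x hx => lt_of_lt_of_le ha hx.1))
      (fun x hx => by
        rw [interior_Icc] at hx
        exact (hd x (ha.trans hx.1)).differentiableAt.differentiableWithinAt)
      (fun x hx => by
        rw [interior_Icc] at hx
        rw [(hd x (ha.trans hx.1)).deriv]
        have := h x hx.1 hx.2
        have hx0 := ha.trans hx.1
        apply div_nonpos_of_nonpos_of_nonneg _ hx0.le
        nlinarith)
    exact this ⟨le_rfl, hab⟩ ⟨hab, le_rfl⟩ hab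
  have g1 : 0 ≤ g 1 := by simp [hg]; norm_num
  have g2 : 0 ≤ g (9/2) := by
    have h1 : Real.log (9/2) = 2 * Real.log 2 + Real.log (9/8) := by
      rw [show (9/2:ℝ) = 2^2 * (9/8) by norm_num, Real.log_mul (by norm_num) (by norm_num), Real.log_pow]
      norm_num
    have h2 := Real.log_two_lt_d9
    have h3 := Real.log_le_sub_one_of_pos (show (0:ℝ) < 9/8 by norm_num)
    simp only [hg]
    rw [h1]
    norm_num at *
    linarith
  have : 0 ≤ g y := by
    rcases le_total y 1 with h | h
    · refine g1.trans (anti y 1 hy h fun x hx hx2 => ?_)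
      exact mul_nonpos_of_nonneg_of_nonpos (mul_nonneg_of_nonpos_of_nonpos (by linarith) (by linarith)) (by linarith)
    rcases le_total y (5/2) with h' | h'
    · refine g1.trans (mono 1 y one_pos h fun x hx hx2 => ?_)
      exact mul_nonneg_of_nonpos_of_nonpos (mul_nonpos_of_nonneg_of_nonpos (by linarith) (by linarith)) (by linarith)
    rcases le_total y (9/2) with h'' | h''
    · refine g2.trans (anti y (9/2) hy h'' fun x hx hx2 => ?_)
      exact mul_nonpos_of_nonneg_of_nonpos (mul_nonneg (by linarith) (by linarith)) (by linarith)
    · refine g2.trans (mono (9/2) y (by norm_num) h'' fun x hx hx2 => ?_)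
      exact mul_nonneg (mul_nonneg (by linarith) (by linarith)) (by linarith)
  simp only [hg] at this
  linarith

/-- sixth roots of unity -/
noncomputable def zt : Fin 6 → ℂ := ![⟨1,0⟩, ⟨1/2, √3/2⟩, ⟨-1/2, √3/2⟩, ⟨-1,0⟩, ⟨-1/2, -√3/2⟩, ⟨1/2, -√3/2⟩]

theorem zt_norm (k : Fin 6) : ‖zt k‖ ≤ 1 := by
  have h3 : √3 ^ 2 = 3 := Real.sq_sqrt (by norm_num)
  have : Complex.normSq (zt k) = 1 := by
    fin_cases k <;> simp [zt, Complex.normSq_apply] <;> nlinarith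
  rw [Complex.normSq_eq_norm_sq] at this
  nlinarith [norm_nonneg (zt k)]

theorem one_step (w a : ℂ) :
    (∑ k, Complex.normSq (a * zt k + w) = 6 * (Complex.normSq w + Complex.normSq a)) ∧
    (∑ k, Complex.normSq (a * zt k + w)^2 = 6 * (Complex.normSq w^2 + 4 * Complex.normSq w * Complex.normSq a + Complex.normSq a^2)) ∧
    (∑ k, Complex.normSq (a * zt k + w)^3 = 6 * (Complex.normSq w^3 + 9 * Complex.normSq w^2 * Complex.normSq a + 9 * Complex.normSq w * Complex.normSq a^2 + Complex.normSq a^3)) ∧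
    (∑ k, Complex.normSq (a * zt k + w)^4 = 6 * (Complex.normSq w^4 + 16 * Complex.normSq w^3 * Complex.normSq a + 36 * Complex.normSq w^2 * Complex.normSq a^2 + 16 * Complex.normSq w * Complex.normSq a^3 + Complex.normSq a^4)) := by
  have h3 : √3 ^ 2 = 3 := Real.sq_sqrt (by norm_num)
  obtain ⟨x, hx⟩ : ∃ x, x = w.re * a.re + w.im * a.im := ⟨_, rfl⟩
  obtain ⟨y, hy⟩ : ∃ y, y = w.im * a.re - w.re * a.im := ⟨_, rfl⟩
  obtain ⟨A, hA⟩ : ∃ A, A = Complex.normSq w + Complex.normSq a := ⟨_, rfl⟩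
  have hxy : x^2 + y^2 = Complex.normSq w * Complex.normSq a := by
    rw [hx, hy, Complex.normSq_apply, Complex.normSq_apply]; ring
  have e0 : Complex.normSq (a * zt 0 + w) = A + 2 * x := by
    simp [zt, hA, hx, Complex.normSq_apply]; ring
  have e1 : Complex.normSq (a * zt 1 + w) = A + (x + √3 * y) := by
    simp [zt, hA, hx, hy, Complex.normSq_apply]; linear_combination (a.im^2 + a.re^2) * h3 / 4
  have e2 : Complex.normSq (a * zt 2 + w) = A + (-x + √3 * y) := by
    simp [zt, hA, hx, hy, Complex.normSq_apply]; linear_combination (a.im^2 + a.re^2) * h3 / 4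
  have e3 : Complex.normSq (a * zt 3 + w) = A - 2 * x := by
    simp [zt, hA, hx, Complex.normSq_apply]; ring
  have e4 : Complex.normSq (a * zt 4 + w) = A - (x + √3 * y) := by
    simp [zt, hA, hx, hy, Complex.normSq_apply]; linear_combination (a.im^2 + a.re^2) * h3 / 4
  have e5 : Complex.normSq (a * zt 5 + w) = A - (-x + √3 * y) := by
    simp [zt, hA, hx, hy, Complex.normSq_apply]; linear_combination (a.im^2 + a.re^2) * h3 / 4
  simp only [Fin.sum_univ_six, e0, e1, e2, e3, e4, e5]
  generalize Complex.normSq w = W at *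
  generalize Complex.normSq a = B at *
  have h4 : √3 ^ 4 = 9 := by rw [show √3^4 = (√3^2)^2 by ring, h3]; norm_num
  have hs : (x + √3 * y)^2 + (-x + √3 * y)^2 = 2 * x^2 + 6 * y^2 := by linear_combination 2 * y^2 * h3
  have hq : (x + √3 * y)^4 + (-x + √3 * y)^4 = 2 * (x^4 + 18 * x^2*y^2 + 9 * y^4) := by
    linear_combination 12 * x^2 * y^2 * h3 + 2 * y^4 * h4
  generalize x + √3 * y = P at *
  generalize -x + √3 * y = Q at *
  refine ⟨by rw [hA]; ring, ?_, ?_, ?_⟩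
  · have : W^2 + 4 * W * B + B^2 = A^2 + 2 * (x^2+y^2) := by rw [hxy, hA]; ring
    rw [this]; linear_combination 2 * hs
  · have : W^3 + 9 * W^2 * B + 9 * W * B^2 + B^3 = A^3 + 6 * A * (x^2+y^2) := by rw [hxy, hA]; ring
    rw [this]; linear_combination 6 * A * hs
  · have : W^4 + 16 * W^3 * B + 36 * W^2 * B^2 + 16 * W * B^3 + B^4 = A^4 + 12 * A^2 * (x^2+y^2) + 6 * (x^2+y^2)^2 := by rw [hxy, hA]; ring
    rw [this]; linear_combination 12 * A^2 * hs + 2 * hq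

theorem sum_cons {α : Type*} [AddCommMonoid α] {β : Type*} [Fintype β] (n : ℕ)
    (F : (Fin (n+1) → β) → α) : ∑ j, F j = ∑ i : β, ∑ j : Fin n → β, F (Fin.cons i j) := by
  rw [← (Fin.consEquiv (fun _ => β)).sum_comp, Fintype.sum_prod_type]
  rfl

theorem sum_insertNth {α : Type*} [AddCommMonoid α] {β : Type*} [Fintype β] (n : ℕ) (l : Fin (n+1))
    (F : (Fin (n+1) → β) → α) :
    ∑ j, F j = ∑ i : β, ∑ j : Fin n → β, F (Fin.insertNth (α := fun _ => β) l i j) := by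
  rw [← (Fin.insertNthEquiv (fun _ => β) l).sum_comp, Fintype.sum_prod_type]
  rfl

theorem holder_multi {ι κ : Type*} [Fintype ι] [Fintype κ] (w : ι → ℝ) (x : ι → κ → ℝ)
    (hw : ∀ l, 0 ≤ w l) (hw1 : ∑ l, w l = 1) (hx : ∀ l i, 0 ≤ x l i) :
    ∑ i, ∏ l, x l i ^ w l ≤ ∏ l, (∑ i, x l i) ^ w l := by
  have hS : ∀ l, 0 ≤ ∑ i, x l i := fun l => Finset.sum_nonneg fun i _ => hx l i
  have key : ∀ i, ∏ l, x l i ^ w l ≤ (∏ l, (∑ i, x l i) ^ w l) * ∑ l, w l * (x l i / ∑ i, x l i) := by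
    intro i
    have h := Real.geom_mean_le_arith_mean_weighted Finset.univ w (fun l => x l i / ∑ i, x l i)
      (fun l _ => hw l) hw1 (fun l _ => div_nonneg (hx l i) (hS l))
    refine le_trans (le_of_eq ?_) (mul_le_mul_of_nonneg_left h
      (Finset.prod_nonneg fun l _ => Real.rpow_nonneg (hS l) _))
    rw [← Finset.prod_mul_distrib]
    refine Finset.prod_congr rfl fun l _ => ?_
    rw [← Real.mul_rpow (hS l) (div_nonneg (hx l i) (hS l))]
    congr 1
    by_cases h0 : ∑ i, x l i = 0
    · have := (Finset.sum_eq_zero_iff_of_nonneg (fun i _ => hx l i)).1 h0 i (Finset.mem_univ _)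
      simp [h0, this]
    · field_simp
  refine (Finset.sum_le_sum fun i _ => key i).trans ?_
  rw [← Finset.mul_sum]
  refine mul_le_of_le_one_right (Finset.prod_nonneg fun l _ => Real.rpow_nonneg (hS l) _) ?_
  rw [Finset.sum_comm, ← hw1]
  refine Finset.sum_le_sum fun l _ => ?_
  rw [← Finset.mul_sum, ← Finset.sum_div]
  exact mul_le_of_le_one_right (hw l) (div_self_le_one _)

theorem mink {ι κ : Type*} [Fintype ι] [Fintype κ] (r : ℝ) (hr : 1 ≤ r) (g : ι → κ → ℝ)
    (hg : ∀ i j, 0 ≤ g i j) :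
    ∑ i, (∑ j, g i j) ^ r ≤ (∑ j, (∑ i, g i j ^ r) ^ (1/r)) ^ r := by
  classical
  have hr0 : 0 < r := by linarith
  have key : ∀ T : Finset κ, (∑ i, (∑ j ∈ T, g i j) ^ r) ^ (1/r) ≤ ∑ j ∈ T, (∑ i, g i j ^ r) ^ (1/r) := by
    intro T
    induction T using Finset.induction_on with
    | empty => simp [hr0.ne']
    | insert a T ha ih =>
      simp only [Finset.sum_insert ha]
      refine (Real.Lp_add_le_of_nonneg Finset.univ hr (fun i _ => hg i a)
        (fun i _ => Finset.sum_nonneg fun j _ => hg i j)).trans ?_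
      gcongr
  have h0 : 0 ≤ ∑ i, (∑ j, g i j) ^ r :=
    Finset.sum_nonneg fun i _ => Real.rpow_nonneg (Finset.sum_nonneg fun j _ => hg i j) _
  have := Real.rpow_le_rpow (Real.rpow_nonneg h0 _) (key Finset.univ) hr0.le
  rwa [← Real.rpow_mul h0, one_div_mul_cancel hr0.ne', Real.rpow_one] at this

noncomputable def Bs {N k : ℕ} (s : ℝ) (l : Fin k) (f : (Fin k → Fin N) → ℝ) : ℝ :=
  (1/(N:ℝ)) * ∑ j, (∑ i, f (Function.update j l i) ^ (2:ℝ)) ^ (s/2)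

theorem Bs_nonneg {N k : ℕ} (s : ℝ) (l : Fin k) (f : (Fin k → Fin N) → ℝ) (hf : ∀ j, 0 ≤ f j) : 0 ≤ Bs s l f :=
  mul_nonneg (by positivity) (Finset.sum_nonneg fun j _ => Real.rpow_nonneg
    (Finset.sum_nonneg fun i _ => Real.rpow_nonneg (hf _) _) _)

theorem Bs_insert {N k : ℕ} (hN : 0 < N) (s : ℝ) (l : Fin (k+1)) (f : (Fin (k+1) → Fin N) → ℝ) :
    Bs s l f = ∑ j : Fin k → Fin N, (∑ i, f (Fin.insertNth (α := fun _ => Fin N) l i j) ^ (2:ℝ)) ^ (s/2) := by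
  have : (N:ℝ) ≠ 0 := by positivity
  unfold Bs
  rw [sum_insertNth k l]
  simp only [Fin.update_insertNth]
  rw [Finset.sum_const]
  simp
  field_simp

theorem Bs_zero {N k : ℕ} (hN : 0 < N) (s : ℝ) (f : (Fin (k+1) → Fin N) → ℝ) :
    Bs s 0 f = ∑ j : Fin k → Fin N, (∑ i, f (Fin.cons i j) ^ (2:ℝ)) ^ (s/2) := by
  rw [Bs_insert hN]
  simp only [Fin.insertNth_zero']

theorem Bs_succ {N k : ℕ} (s : ℝ) (l : Fin k) (f : (Fin (k+1) → Fin N) → ℝ) :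
    Bs s l.succ f = ∑ i : Fin N, Bs s l (fun j => f (Fin.cons i j)) := by
  unfold Bs
  rw [sum_cons, ← Finset.mul_sum]
  simp only [Fin.cons_update]

theorem blei {N : ℕ} (hN : 0 < N) (s p m : ℝ) (hs : 0 < s) (hs2 : s ≤ 2) (hm : 0 < m) (hp : 0 < p)
    (hpm : p * ((m-1)/(s*m) + 1/(2*m)) = 1) (k : ℕ) :
    ∀ (t : ℝ), 0 ≤ t → t + k = m → ∀ f : (Fin k → Fin N) → ℝ, (∀ j, 0 ≤ f j) →
    ∑ j, f j ^ p ≤ (∑ j, f j ^ s) ^ (p*t/(m*s)) * ∏ l : Fin k, (Bs s l f) ^ (p/(m*s)) := by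
  induction k with
  | zero =>
    intro t ht htm f hf
    have : t = m := by simpa using htm
    subst this
    simp only [Finset.univ_unique, Finset.sum_singleton, Finset.univ_eq_empty, Finset.prod_empty, mul_one]
    rw [← Real.rpow_mul (hf _)]
    apply le_of_eq
    congr 1
    field_simp
  | succ k ih =>
    intro t ht htm f hf
    have hms : 0 < m * s := by positivity
    rw [sum_cons]
    set F : Fin N → ℝ := fun i => ∑ j : Fin k → Fin N, f (Fin.cons i j) ^ s with hF
    have hF0 : ∀ i, 0 ≤ F i := fun i => Finset.sum_nonneg fun j _ => Real.rpow_nonneg (hf _) _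
    have h1 : ∀ i : Fin N, ∑ j : Fin k → Fin N, f (Fin.cons i j) ^ p ≤
        F i ^ (p*t/(m*s)) * ((F i ^ (2/s)) ^ (p/(2*m)) * ∏ l : Fin k, (Bs s l (fun j => f (Fin.cons i j))) ^ (p/(m*s))) := by
      intro i
      refine (ih (t+1) (by linarith) (by push_cast at htm; linarith) (fun j => f (Fin.cons i j)) (fun j => hf _)).trans (le_of_eq ?_)
      rw [← mul_assoc]
      congr 1
      rw [← Real.rpow_mul (hF0 i), ← Real.rpow_add_of_nonneg (hF0 i) (by positivity) (by positivity)]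
      congr 1
      field_simp
    refine (Finset.sum_le_sum fun i _ => h1 i).trans ?_
    have h2 := holder_multi (ι := Fin (k+1+1)) (κ := Fin N)
      (Fin.cons (p*t/(m*s)) (Fin.cons (p/(2*m)) (fun _ => p/(m*s))))
      (Fin.cons F (Fin.cons (fun i => F i ^ (2/s)) (fun l i => Bs s l (fun j => f (Fin.cons i j)))))
      (by
        intro l
        refine Fin.cases ?_ (fun l => Fin.cases ?_ (fun l => ?_) l) l <;> simp <;> positivity)
      (by
        simp only [Fin.sum_univ_succ, Fin.cons_zero, Fin.cons_succ, Finset.sum_const]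
        simp only [Finset.card_univ, Fintype.card_fin, nsmul_eq_mul]
        push_cast at htm
        have : t = m - k - 1 := by linarith
        rw [← hpm, this]
        field_simp
        ring)
      (by
        intro l i
        refine Fin.cases ?_ (fun l => Fin.cases ?_ (fun l => ?_) l) l
        · simpa using hF0 i
        · simpa using Real.rpow_nonneg (hF0 i) _
        · simpa using Bs_nonneg s l _ (fun j => hf _))
    simp only [Fin.prod_univ_succ (n := k+1), Fin.prod_univ_succ (n := k), Fin.cons_zero, Fin.cons_succ] at h2
    refine h2.trans ?_
    rw [sum_cons, Fin.prod_univ_succ]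
    simp only [Bs_succ]
    have hB : 0 ≤ ∏ l : Fin k, (∑ i, Bs s l (fun j => f (Fin.cons i j))) ^ (p/(m*s)) :=
      Finset.prod_nonneg fun l _ => Real.rpow_nonneg (Finset.sum_nonneg fun i _ => Bs_nonneg s l _ (fun j => hf _)) _
    refine mul_le_mul_of_nonneg_left (mul_le_mul_of_nonneg_right ?_ hB)
      (Real.rpow_nonneg (Finset.sum_nonneg fun i _ => hF0 i) _)
    have h3 := mink (2/s) (by rw [le_div_iff₀ hs]; linarith) (fun (i : Fin N) (j : Fin k → Fin N) => f (Fin.cons i j) ^ s)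
      (fun i j => Real.rpow_nonneg (hf _) _)
    have h4 : ∀ x : ℝ, 0 ≤ x → (x ^ s) ^ (2/s) = x ^ (2:ℝ) := by
      intro x hx
      rw [← Real.rpow_mul hx]
      congr 1
      field_simp
    simp only [h4 _ (hf _), one_div_div] at h3
    rw [← Bs_zero hN] at h3
    refine (Real.rpow_le_rpow (Finset.sum_nonneg fun i _ => Real.rpow_nonneg (hF0 i) _) h3 (by positivity)).trans (le_of_eq ?_)
    rw [← Real.rpow_mul (Bs_nonneg s 0 f hf)]
    congr 1
    field_simp

noncomputable def sN {N : ℕ} (a : Fin N → ℂ) (k : Fin N → Fin 6) : ℝ := Complex.normSq (∑ i, a i * zt (k i))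
noncomputable def pw {N : ℕ} (a : Fin N → ℂ) (d : ℕ) : ℝ := ∑ i, Complex.normSq (a i) ^ d

theorem pw_succ {N : ℕ} (a : Fin (N+1) → ℂ) (d : ℕ) :
    pw a d = Complex.normSq (a 0) ^ d + pw (fun i => a i.succ) d := by
  unfold pw; rw [Fin.sum_univ_succ]

theorem sN_cons {N : ℕ} (a : Fin (N+1) → ℂ) (k0 : Fin 6) (k : Fin N → Fin 6) :
    sN a (Fin.cons k0 k) = Complex.normSq (a 0 * zt k0 + ∑ i, a (Fin.succ i) * zt (k i)) := by
  unfold sN; rw [Fin.sum_univ_succ]; simp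

theorem moments (N : ℕ) : ∀ a : Fin N → ℂ,
    (∑ k, sN a k = 6^N * pw a 1) ∧
    (∑ k, sN a k ^ 2 = 6^N * (2 * pw a 1 ^ 2 - pw a 2)) ∧
    (∑ k, sN a k ^ 3 = 6^N * (6 * pw a 1 ^ 3 - 9 * pw a 1 * pw a 2 + 4 * pw a 3)) ∧
    (∑ k, sN a k ^ 4 = 6^N * (24 * pw a 1 ^ 4 - 72 * pw a 1 ^ 2 * pw a 2 + 18 * pw a 2 ^ 2
      + 64 * pw a 1 * pw a 3 - 33 * pw a 4)) := by
  induction N with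
  | zero => intro a; simp [sN, pw]
  | succ N ih =>
    intro a
    obtain ⟨i1, i2, i3, i4⟩ := ih (fun i => a i.succ)
    have hc : (∑ k : Fin N → Fin 6, (1:ℝ)) = 6 ^ N := by simp
    simp only [sum_cons N, sN_cons, pw_succ]
    rw [Finset.sum_comm]
    rw [Finset.sum_comm (f := fun (x : Fin 6) (y : Fin N → Fin 6) => Complex.normSq (a 0 * zt x + ∑ i, a (Fin.succ i) * zt (y i)) ^ 2)]
    rw [Finset.sum_comm (f := fun (x : Fin 6) (y : Fin N → Fin 6) => Complex.normSq (a 0 * zt x + ∑ i, a (Fin.succ i) * zt (y i)) ^ 3)]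
    rw [Finset.sum_comm (f := fun (x : Fin 6) (y : Fin N → Fin 6) => Complex.normSq (a 0 * zt x + ∑ i, a (Fin.succ i) * zt (y i)) ^ 4)]
    have o := fun y : Fin N → Fin 6 => one_step (∑ i, a (Fin.succ i) * zt (y i)) (a 0)
    simp only [(o _).1, (o _).2.1, (o _).2.2.1, (o _).2.2.2]
    change (∑ k, sN (fun i => a i.succ) k = _) at i1
    have hs : ∀ y : Fin N → Fin 6, Complex.normSq (∑ i, a (Fin.succ i) * zt (y i)) = sN (fun i => a i.succ) y := fun y => rfl
    simp only [hs]
    generalize Complex.normSq (a 0) = A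
    generalize (fun i => a (Fin.succ i)) = b at *
    have c0 : ∀ c : ℝ, ∑ k : Fin N → Fin 6, c = 6^N * c := by intro c; simp
    simp only [← Finset.mul_sum, Finset.sum_add_distrib, ← Finset.sum_mul, mul_assoc, c0, i1, i2, i3, i4]
    refine ⟨by ring, by ring, by ring, by ring⟩

theorem entropy {N : ℕ} (a : Fin N → ℂ) (h1 : pw a 1 = 1) :
    ∑ k, sN a k * Real.log (sN a k) ≤ 6^N * 0.55 := by
  obtain ⟨i1, i2, i3, i4⟩ := moments N a
  have hle : ∀ k, sN a k * Real.log (sN a k) ≤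
      -1.285 * sN a k + (73/45) * sN a k^2 - (16/45) * sN a k^3 + (4/135) * sN a k^4 := by
    intro k
    have h0 : 0 ≤ sN a k := Complex.normSq_nonneg _
    rcases h0.eq_or_lt with h | h
    · rw [← h]; simp
    · have := mul_le_mul_of_nonneg_left (log_le_q _ h) h0
      linarith
  refine (Finset.sum_le_sum fun k _ => hle k).trans ?_
  simp only [Finset.sum_add_distrib, Finset.sum_sub_distrib, ← Finset.mul_sum, i1, i2, i3, i4, h1]
  have hv : pw a 2 ^ 2 ≤ pw a 3 := by
    have h := Finset.sum_mul_sq_le_sq_mul_sq Finset.univ (fun i => ‖a i‖) (fun i => ‖a i‖ ^ 3)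
    have e1 : ∑ i, ‖a i‖ ^ 2 = 1 := by rw [← h1]; simp [pw, Complex.normSq_eq_norm_sq]
    have e2 : ∑ i, ‖a i‖ * ‖a i‖ ^ 3 = pw a 2 := by
      simp only [pw, Complex.normSq_eq_norm_sq]; exact Finset.sum_congr rfl fun i _ => by ring
    have e3 : ∑ i, (‖a i‖ ^ 3) ^ 2 = pw a 3 := by
      simp only [pw, Complex.normSq_eq_norm_sq]; exact Finset.sum_congr rfl fun i _ => by ring
    rw [e1, e2, e3] at h
    linarith
  have hw : 0 ≤ pw a 4 - 2 * 0.52 * pw a 3 + 0.52^2 * pw a 2 := by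
    simp only [pw, Finset.mul_sum, ← Finset.sum_sub_distrib, ← Finset.sum_add_distrib]
    refine Finset.sum_nonneg fun i _ => ?_
    nlinarith [sq_nonneg (Complex.normSq (a i) ^ 2 - 0.52 * Complex.normSq (a i))]
  have hu : 0 ≤ pw a 2 := Finset.sum_nonneg fun i _ => pow_nonneg (Complex.normSq_nonneg _) _
  have hv0 : 0 ≤ pw a 3 := Finset.sum_nonneg fun i _ => pow_nonneg (Complex.normSq_nonneg _) _
  have h6 : (0:ℝ) < 6^N := by positivity
  have : (-1.285:ℝ) * 1 + (73/45) * (2 * 1 ^ 2 - pw a 2) - (16/45) * (6 * 1 ^ 3 - 9 * 1 * pw a 2 + 4 * pw a 3)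
     + (4/135) * (24 * 1 ^ 4 - 72 * 1 ^ 2 * pw a 2 + 18 * pw a 2 ^ 2
      + 64 * 1 * pw a 3 - 33 * pw a 4) ≤ 0.55 := by
    norm_num at *
    linarith
  nlinarith

theorem khin_unit {N : ℕ} (a : Fin N → ℂ) (h1 : pw a 1 = 1) (s : ℝ) (hs : 0 < s) (hs2 : s ≤ 2) :
    6^N ≤ Real.exp (0.55 * (1 - s/2)) * ∑ k, sN a k ^ (s/2) := by
  obtain ⟨i1, -⟩ := moments N a
  have hE := entropy a h1
  have hpt : ∀ k, Real.exp (-(0.55 * (1 - s/2))) * ((1 + 0.55 * (1 - s/2)) * sN a k - (1-s/2) * (sN a k * Real.log (sN a k))) ≤ sN a k ^ (s/2) := by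
    intro k
    have h0 : 0 ≤ sN a k := Complex.normSq_nonneg _
    rcases h0.eq_or_lt with h | h
    · rw [← h]; simp; positivity
    · have e : sN a k ^ (s/2) = sN a k * (Real.exp (-(0.55 * (1 - s/2))) * Real.exp ((s/2-1) * (Real.log (sN a k) - 0.55))) := by
        rw [← Real.exp_add, Real.rpow_def_of_pos h]
        nth_rewrite 2 [← Real.exp_log h]
        rw [← Real.exp_add]
        congr 1
        ring
      rw [e]
      have := Real.add_one_le_exp ((s/2-1) * (Real.log (sN a k) - 0.55))
      have h2 := mul_le_mul_of_nonneg_left this (mul_nonneg h0 (Real.exp_pos (-(0.55 * (1 - s/2)))).le)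
      linarith
  have hsum := Finset.sum_le_sum (s := Finset.univ) fun k _ => hpt k
  rw [← Finset.mul_sum, Finset.sum_sub_distrib, ← Finset.mul_sum, ← Finset.mul_sum, i1, h1] at hsum
  have hx := Real.exp_pos (0.55 * (1 - s/2))
  have h2 : (6:ℝ)^N ≤ (1 + 0.55 * (1 - s / 2)) * (6 ^ N * 1) - (1 - s / 2) * ∑ k, sN a k * Real.log (sN a k) := by
    have := mul_le_mul_of_nonneg_left hE (show 0 ≤ 1 - s/2 by linarith)
    linarith
  rw [Real.exp_neg] at hsum
  have h3 := (inv_mul_le_iff₀ hx).1 hsum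
  exact h2.trans h3

theorem khin {N : ℕ} (a : Fin N → ℂ) (s : ℝ) (hs : 0 < s) (hs2 : s ≤ 2) :
    6^N * (∑ i, ‖a i‖ ^ (2:ℝ)) ^ (s/2) ≤
      Real.exp (0.55 * (1 - s/2)) * ∑ k : Fin N → Fin 6, ‖∑ i, a i * zt (k i)‖ ^ s := by
  have hA : ∑ i, ‖a i‖ ^ (2:ℝ) = pw a 1 := by
    simp [pw, Complex.normSq_eq_norm_sq]
  rw [hA]
  have hB : ∀ k : Fin N → Fin 6, ‖∑ i, a i * zt (k i)‖ ^ s = sN a k ^ (s/2) := by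
    intro k
    unfold sN
    rw [Complex.normSq_eq_norm_sq, ← Real.rpow_natCast, ← Real.rpow_mul (norm_nonneg _)]
    congr 1; push_cast; ring
  simp only [hB]
  have hp0 : 0 ≤ pw a 1 := Finset.sum_nonneg fun i _ => pow_nonneg (Complex.normSq_nonneg _) _
  rcases hp0.eq_or_lt with h | h
  · rw [← h, Real.zero_rpow (by positivity), mul_zero]
    exact mul_nonneg (Real.exp_pos _).le (Finset.sum_nonneg fun k _ => Real.rpow_nonneg (Complex.normSq_nonneg _) _)
  · set c : ℝ := √(pw a 1) with hc
    have hc2 : c ^ 2 = pw a 1 := Real.sq_sqrt hp0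
    have hc0 : 0 < c := Real.sqrt_pos.2 h
    have hn : Complex.normSq ((c:ℂ)⁻¹) = (pw a 1)⁻¹ := by
      rw [Complex.normSq_inv, Complex.normSq_ofReal, ← sq, hc2]
    have hk := khin_unit (fun i => (c:ℂ)⁻¹ * a i) (by
      unfold pw
      simp only [Complex.normSq_mul, hn, pow_one, ← Finset.mul_sum]
      have : ∑ i, Complex.normSq (a i) = pw a 1 := by simp [pw]
      rw [this]
      exact inv_mul_cancel₀ h.ne') s hs hs2
    have hS : ∀ k, sN (fun i => (c:ℂ)⁻¹ * a i) k = (pw a 1)⁻¹ * sN a k := by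
      intro k
      unfold sN
      simp only [mul_assoc, ← Finset.mul_sum]
      rw [Complex.normSq_mul, hn]
    simp only [hS] at hk
    have hS2 : ∀ k, ((pw a 1)⁻¹ * sN a k) ^ (s/2) = ((pw a 1) ^ (s/2))⁻¹ * sN a k ^ (s/2) := by
      intro k
      rw [Real.mul_rpow (by positivity) (show 0 ≤ sN a k from Complex.normSq_nonneg _), Real.inv_rpow hp0]
    simp only [hS2, ← Finset.mul_sum] at hk
    have hq : 0 < pw a 1 ^ (s/2) := Real.rpow_pos_of_pos h _
    calc _ ≤ (Real.exp (0.55 * (1 - s / 2)) * ((pw a 1 ^ (s / 2))⁻¹ * ∑ i, sN a i ^ (s / 2))) * pw a 1 ^ (s/2) := by gcongr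
      _ = _ := by field_simp

noncomputable def Hm (n : ℕ) : ℝ := ∑ k ∈ Finset.range n, 1/((k:ℝ)+1)

theorem BHind (N : ℕ) (hN : 0 < N) (n : ℕ) : ∀ (a : (Fin (n+1) → Fin N) → ℂ) (M : ℝ),
    (∀ z : Fin (n+1) → Fin N → ℂ, (∀ l i, ‖z l i‖ ≤ 1) → ‖∑ j, a j * ∏ l, z l (j l)‖ ≤ M) →
    ∑ j, ‖a j‖ ^ (2*((n:ℝ)+1)/((n:ℝ)+2)) ≤ (Real.exp (0.275 * Hm n) * M) ^ (2*((n:ℝ)+1)/((n:ℝ)+2)) := by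
  induction n with
  | zero =>
    intro a M h
    have h1 := h (fun _ i => if a (fun _ => i) = 0 then 0 else (‖a (fun _ => i)‖ : ℂ) / a (fun _ => i)) (by
      intro l i
      split_ifs with h0
      · simp
      · simp [h0])
    have e : ∀ j : Fin 1 → Fin N, a j * ∏ l, (fun (_ : Fin 1) i => if a (fun _ => i) = 0 then 0 else (‖a (fun _ => i)‖ : ℂ) / a (fun _ => i)) l (j l) = (‖a j‖ : ℂ) := by
      intro j
      have hj : (fun _ : Fin 1 => j 0) = j := by funext x; rw [Subsingleton.elim x 0]
      simp only [Finset.univ_unique, Finset.prod_singleton, Fin.default_eq_zero]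
      rw [hj]
      split_ifs with h0
      · simp [h0]
      · field_simp
    rw [Finset.sum_congr rfl fun j _ => e j] at h1
    rw [← Complex.ofReal_sum, Complex.norm_real] at h1
    have := (le_abs_self _).trans h1
    simpa [Hm] using this
  | succ n ih =>
    intro a M h
    have hM : 0 ≤ M := (norm_nonneg _).trans (h (fun _ _ => 0) (by simp))
    set s : ℝ := 2*((n:ℝ)+1)/((n:ℝ)+2) with hs
    have hs0 : 0 < s := by positivity
    have hs2 : s ≤ 2 := by rw [hs, div_le_iff₀ (by positivity)]; linarith
    set p : ℝ := 2*(((n+1:ℕ):ℝ)+1)/(((n+1:ℕ):ℝ)+2) with hp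
    have hp0 : 0 < p := by positivity
    set m : ℝ := ((n+1+1:ℕ):ℝ) with hm
    have hm0 : 0 < m := by positivity
    have hb := blei hN s p m hs0 hs2 hm0 hp0 (by
      rw [hs, hp, hm]; push_cast; field_simp; ring) (n+1+1) 0 le_rfl (by simp [hm]) (fun j => ‖a j‖) (fun j => norm_nonneg _)
    simp only [mul_zero, zero_div, Real.rpow_zero, one_mul] at hb
    set D := Real.exp (0.275 * Hm (n+1)) * M with hD
    have hD0 : 0 ≤ D := mul_nonneg (Real.exp_pos _).le hM
    have hBs : ∀ l, Bs s l (fun j => ‖a j‖) ≤ D ^ s := by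
      intro l
      rw [Bs_insert hN]
      have h6 : (0:ℝ) < 6^N := by positivity
      refine le_of_mul_le_mul_left ?_ h6
      rw [Finset.mul_sum]
      refine (Finset.sum_le_sum fun j _ => khin (fun i => a (Fin.insertNth (α := fun _ => Fin N) l i j)) s hs0 hs2).trans ?_
      rw [← Finset.mul_sum, Finset.sum_comm]
      have hin : ∀ k : Fin N → Fin 6, ∑ j : Fin (n+1) → Fin N, ‖∑ i, a (Fin.insertNth (α := fun _ => Fin N) l i j) * zt (k i)‖ ^ s ≤ (Real.exp (0.275 * Hm n) * M) ^ s := by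
        intro k
        refine ih (fun j => ∑ i, a (Fin.insertNth (α := fun _ => Fin N) l i j) * zt (k i)) M ?_
        intro z hz
        have h1 := h (Fin.insertNth (α := fun _ => Fin N → ℂ) l (fun i => zt (k i)) z) (by
          intro l' i
          refine Fin.succAboveCases (α := fun l' => ‖(Fin.insertNth (α := fun _ => Fin N → ℂ) l (fun i => zt (k i)) z) l' i‖ ≤ 1) l ?_ ?_ l'
          · simpa using zt_norm _
          · intro l''; simpa using hz l'' i)
        rw [sum_insertNth (n+1) l, Finset.sum_comm] at h1
        refine le_trans (le_of_eq ?_) h1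
        congr 1
        refine Finset.sum_congr rfl fun j _ => ?_
        rw [Finset.sum_mul]
        refine Finset.sum_congr rfl fun i _ => ?_
        rw [Fin.prod_univ_succAbove _ l]
        simp [mul_assoc]
      refine (mul_le_mul_of_nonneg_left (Finset.sum_le_sum fun k _ => hin k) (Real.exp_pos _).le).trans (le_of_eq ?_)
      have hK : Real.exp (0.55 * (1 - s/2)) = Real.exp (0.275 * (1/((n:ℝ)+1))) ^ s := by
        rw [← Real.exp_mul]
        congr 1
        rw [hs]; field_simp; ring
      rw [Finset.sum_const, hK, hD]
      have hH : Hm (n+1) = Hm n + 1/((n:ℝ)+1) := by unfold Hm; rw [Finset.sum_range_succ]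
      rw [hH, mul_add, Real.exp_add, mul_comm (Real.exp (0.275 * Hm n)) (Real.exp (0.275 * (1/((n:ℝ)+1)))), mul_assoc (Real.exp (0.275 * _)),
        Real.mul_rpow (Real.exp_pos _).le (mul_nonneg (Real.exp_pos _).le hM)]
      simp
      ring
    refine hb.trans ?_
    refine (Finset.prod_le_prod (fun l _ => Real.rpow_nonneg (Bs_nonneg s l _ fun j => norm_nonneg _) _)
      (fun l _ => Real.rpow_le_rpow (Bs_nonneg s l _ fun j => norm_nonneg _) (hBs l) (by positivity))).trans (le_of_eq ?_)
    rw [Finset.prod_const, Finset.card_univ, Fintype.card_fin, ← Real.rpow_mul hD0, ← Real.rpow_natCast, ← Real.rpow_mul hD0, ← hm]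
    congr 1
    field_simp

theorem Hm_le (n : ℕ) (hn : 0 < n) : Hm n ≤ 1 + Real.log n := by
  have h := harmonic_le_one_add_log n
  have e : Hm n = (harmonic n : ℝ) := by
    simp [Hm, harmonic]
  rw [e]; exact h

theorem stmt16 (n : ℕ) (hn : 2 ^ 50 < n) (N : ℕ) (hN : 0 < N)
    (U : ContinuousMultilinearMap ℂ (fun _ : Fin n => (Fin N → ℂ)) ℂ) :
    BHcomplex n N U ≤ 0.99135458644 * ((n : ℝ) - 1) ^ (0.304975 : ℝ) * ‖U‖ := by
  obtain ⟨n, rfl⟩ : ∃ m, n = m + 1 := ⟨n - 1, by omega⟩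
  have hn' : 2^50 ≤ n := by omega
  have hnR : (2:ℝ)^50 ≤ n := by exact_mod_cast hn'
  have hn0 : (0:ℝ) < n := lt_of_lt_of_le (by positivity) hnR
  set a : (Fin (n+1) → Fin N) → ℂ := fun j => U (fun k => Pi.single (j k) (1 : ℂ)) with ha
  have hb := BHind N hN n a ‖U‖ (by
    intro z hz
    have e : ∑ j, a j * ∏ l, z l (j l) = U z := by
      have hz' : z = fun l => ∑ i, z l i • (Pi.single i (1:ℂ) : Fin N → ℂ) := by
        funext l
        ext x
        simp [Finset.sum_apply, Pi.single_apply]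
      conv_rhs => rw [hz']
      rw [U.map_sum]
      refine Finset.sum_congr rfl fun j _ => ?_
      rw [U.map_smul_univ (fun l => z l (j l)) (fun l => Pi.single (j l) (1:ℂ)), smul_eq_mul, mul_comm]
    rw [e]
    refine (U.le_opNorm z).trans ?_
    refine mul_le_of_le_one_right (norm_nonneg _) ?_
    refine Finset.prod_le_one (fun l _ => norm_nonneg _) fun l _ => ?_
    exact (pi_norm_le_iff_of_nonneg zero_le_one).2 (hz l))
  set p : ℝ := 2*((n:ℝ)+1)/((n:ℝ)+2) with hp
  have hp0 : 0 < p := by positivity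
  have hC : Real.exp (0.275 * Hm n) ≤ 0.99135458644 * (n:ℝ) ^ (0.304975 : ℝ) := by
    have h1 := Hm_le n (by omega)
    have hlog : 34.6 ≤ Real.log n := by
      have := Real.log_le_log (by positivity) hnR
      rw [Real.log_pow] at this
      have h2 := Real.log_two_gt_d9
      push_cast at this
      norm_num at *
      linarith
    have h3 : (-0.01:ℝ) ≤ Real.log 0.99135458644 := by
      have := Real.one_sub_inv_le_log_of_pos (show (0:ℝ) < 0.99135458644 by norm_num)
      refine le_trans ?_ this
      norm_num
    have : (0.99135458644:ℝ) = Real.exp (Real.log 0.99135458644) := (Real.exp_log (by norm_num)).symm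
    rw [this, Real.rpow_def_of_pos hn0, ← Real.exp_add]
    apply Real.exp_le_exp.2
    generalize Real.log 0.99135458644 = y at *
    norm_num at *
    linarith
  have hfin : BHcomplex (n+1) N U ≤ Real.exp (0.275 * Hm n) * ‖U‖ := by
    unfold BHcomplex
    have e1 : (2 * ((n+1:ℕ):ℝ)) / (((n+1:ℕ):ℝ)+1) = p := by rw [hp]; push_cast; ring
    have e2 : (((n+1:ℕ):ℝ)+1) / (2 * ((n+1:ℕ):ℝ)) = p⁻¹ := by rw [← e1, inv_div]
    rw [e1, e2]
    refine (Real.rpow_le_rpow (Finset.sum_nonneg fun j _ => Real.rpow_nonneg (norm_nonneg _) _) hb (by positivity)).trans (le_of_eq ?_)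
    exact Real.rpow_rpow_inv (mul_nonneg (Real.exp_pos _).le (norm_nonneg _)) hp0.ne'
  refine hfin.trans ?_
  push_cast
  rw [add_sub_cancel_right]
  exact mul_le_mul_of_nonneg_right hC (norm_nonneg _)
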